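/- Fix a real constant D > 0 and reals n_h, n_v > 0. The derivative of the map α ↦ l̄(n_h, n_v, α) at α = 1 equals 2D·(n_h² + n_v² + 1)/(3(n_h + n_v)), and in particular this derivative is strictly positive. -/

import Mathlib

/-- Average travel distance of a sorting task. -/
noncomputable def lbar (D nh nv α : ℝ) : ℝ :=
  2 * D * ((nh^2 + nv^2) / (nh + nv) * ((-α^4 - 5*α^2 + 18*α) / 12)
    + nh * nv / (nh + nv) * ((-α^2 + 2*α) / 4)
    + (3*α^3 - α^2 - 3*α - 5) / (12 * (nh + nv))
    + (nh + nv) * ((α^2 - 2*α + 1) / 2)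
    + (-α^2 + 2*α) / 2)

theorem hasDerivAt_lbar (D nh nv α : ℝ) :
    HasDerivAt (fun α => lbar D nh nv α)
      (2 * D * ((nh^2 + nv^2) / (nh + nv) * ((-4*α^3 - 10*α + 18) / 12)
        + nh * nv / (nh + nv) * ((1 - α) / 2)
        + (9*α^2 - 2*α - 3) / (12 * (nh + nv))
        + (nh + nv) * (α - 1)
        + (1 - α))) α := by
  have hid : HasDerivAt (fun x : ℝ => x) 1 α := hasDerivAt_id' α
  have hsq : HasDerivAt (fun x : ℝ => x^2) (2*α) α := by
    simpa using hasDerivAt_pow 2 α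
  have hcube : HasDerivAt (fun x : ℝ => x^3) (3*α^2) α := by
    simpa using hasDerivAt_pow 3 α
  have hfourth : HasDerivAt (fun x : ℝ => x^4) (4*α^3) α := by
    simpa using hasDerivAt_pow 4 α
  have hquartic : HasDerivAt (fun x : ℝ => -x^4 - 5*x^2 + 18*x)
      (-(4*α^3) - 5*(2*α) + 18*1) α :=
    (hfourth.neg.sub (hsq.const_mul 5)).add (hid.const_mul 18)
  have hcubic : HasDerivAt (fun x : ℝ => 3*x^3 - x^2 - 3*x - 5)
      (3*(3*α^2) - 2*α - 3*1) α :=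
    (((hcube.const_mul 3).sub hsq).sub (hid.const_mul 3)).sub_const 5
  have hconcave : HasDerivAt (fun x : ℝ => -x^2 + 2*x) (-(2*α) + 2*1) α :=
    hsq.neg.add (hid.const_mul 2)
  have hconvex : HasDerivAt (fun x : ℝ => x^2 - 2*x + 1) (2*α - 2*1) α :=
    (hsq.sub (hid.const_mul 2)).add_const 1
  have hsum := ((((((hquartic.div_const 12).const_mul ((nh^2 + nv^2) / (nh + nv))).add
    ((hconcave.div_const 4).const_mul (nh * nv / (nh + nv)))).add
    (hcubic.div_const (12 * (nh + nv)))).add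
    ((hconvex.div_const 2).const_mul (nh + nv))).add
    (hconcave.div_const 2)).const_mul (2 * D)
  exact HasDerivAt.congr_deriv (f := fun x => lbar D nh nv x) hsum (by ring)

theorem deriv_lbar_one (D nh nv : ℝ) :
    deriv (fun α => lbar D nh nv α) 1 =
      2 * D * (nh^2 + nv^2 + 1) / (3 * (nh + nv)) := by
  rw [(hasDerivAt_lbar D nh nv 1).deriv]
  -- At `α = 1` only the quartic and cubic numerators have nonzero slope, both equal to `4`.
  simp only [div_eq_mul_inv, mul_inv]
  ring

theorem deriv_lbar_one_pos {D nh nv : ℝ} (hD : 0 < D) (hsum : 0 < nh + nv) :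
    0 < deriv (fun α => lbar D nh nv α) 1 := by
  rw [deriv_lbar_one]
  positivity

theorem lbar_deriv_at_one
    (D nh nv : ℝ) (hD : 0 < D) (hnh : 0 < nh) (hnv : 0 < nv) :
    deriv (fun α => lbar D nh nv α) 1 =
      2 * D * (nh^2 + nv^2 + 1) / (3 * (nh + nv)) ∧
    0 < deriv (fun α => lbar D nh nv α) 1 :=
  ⟨deriv_lbar_one D nh nv, deriv_lbar_one_pos hD (add_pos hnh hnv)⟩
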